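/- Suppose the state digraph has a line condensation C_1,…,C_ℓ and there is a permutation σ of the state vertices such that x → σ(x) is a state edge for every state vertex x. Let P ∈ ℝ_{≥0}^{m×p}. Then min { P(K) : K ⊆ {1,…,m}×{1,…,p} satisfies conditions (a) and (b) } = min { P(K) : K ⊆ {1,…,m}×{1,…,p} such that for every k ∈ {1,…,ℓ} there exist (i,j) ∈ K and q ≤ k ≤ r with an input edge from u_i to a state in C_q and an output edge from a state in C_r to y_j }; that is, the optimal feedback-selection cost equals the minimum cost of a set of feedback edges whose associated intervals cover {1,…,ℓ}. -/

import Mathlib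

/-- Vertices of a structured system: states `x_1,…,x_n`, inputs `u_1,…,u_m`,
outputs `y_1,…,y_p`. -/
abbrev SVert (n m p : ℕ) : Type := Fin n ⊕ Fin m ⊕ Fin p

/-- State vertex. -/
def stX {n m p : ℕ} (a : Fin n) : SVert n m p := Sum.inl a

/-- Input vertex. -/
def stU {n m p : ℕ} (i : Fin m) : SVert n m p := Sum.inr (Sum.inl i)

/-- Output vertex. -/
def stY {n m p : ℕ} (j : Fin p) : SVert n m p := Sum.inr (Sum.inr j)

/-- Edge relation of the closed-loop digraph: state edges (given by `A`), input
edges `u_i → x_c` (given by `B`), output edges `x_a → y_j` (given by `Co`), and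
feedback edges `y_j → u_i` for `(i, j) ∈ K`. -/
def closedEdge {n m p : ℕ} (A : Fin n → Fin n → Prop) (B : Fin m → Fin n → Prop)
    (Co : Fin n → Fin p → Prop) (K : Finset (Fin m × Fin p)) :
    SVert n m p → SVert n m p → Prop
  | Sum.inl a, Sum.inl c => A a c
  | Sum.inr (Sum.inl i), Sum.inl c => B i c
  | Sum.inl a, Sum.inr (Sum.inr j) => Co a j
  | Sum.inr (Sum.inr j), Sum.inr (Sum.inl i) => (i, j) ∈ K
  | _, _ => False

/-- Two vertices lie in the same strongly connected component: each is reachable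
from the other (reachability is the reflexive–transitive closure of the edges). -/
def sameSCC {α : Type*} (E : α → α → Prop) (a b : α) : Prop :=
  Relation.ReflTransGen E a b ∧ Relation.ReflTransGen E b a

/-- Condition (a): every state vertex lies in the same SCC of the closed-loop
digraph as both endpoints `u_i`, `y_j` of some feedback edge `(i, j) ∈ K`. -/
def condA {n m p : ℕ} (A : Fin n → Fin n → Prop) (B : Fin m → Fin n → Prop)
    (Co : Fin n → Fin p → Prop) (K : Finset (Fin m × Fin p)) : Prop :=
  ∀ a : Fin n, ∃ e ∈ K,
    sameSCC (closedEdge A B Co K) (stX a) (stU e.1) ∧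
    sameSCC (closedEdge A B Co K) (stX a) (stY e.2)

/-- Condition (b): a collection of vertex-disjoint directed cycles of the
closed-loop digraph covers all state vertices.  Encoded as: there is a set `S`
of vertices containing all state vertices and a map `f` permuting `S` such that
`v → f v` is an edge for every `v ∈ S` (the cycles of `f` are the cycle
collection). -/
def condB {n m p : ℕ} (A : Fin n → Fin n → Prop) (B : Fin m → Fin n → Prop)
    (Co : Fin n → Fin p → Prop) (K : Finset (Fin m × Fin p)) : Prop :=
  ∃ (S : Set (SVert n m p)) (f : SVert n m p → SVert n m p),
    Set.BijOn f S S ∧ (∀ a : Fin n, stX a ∈ S) ∧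
    ∀ v ∈ S, closedEdge A B Co K v (f v)

/-- Cost of a feedback set under cost matrix `P`. -/
def fcost {m p : ℕ} (P : Fin m → Fin p → NNReal) (K : Finset (Fin m × Fin p)) : NNReal :=
  ∑ e ∈ K, P e.1 e.2

/-- `C : Fin n → Fin ℓ` (assigning each state its class) is a line condensation
of the state digraph: classes are nonempty, each class induces a strongly
connected subgraph, every state edge stays in a class or goes from `C_k` to
`C_{k+1}`, and each consecutive pair of classes is linked by a state edge. -/
structure IsLineCondensation {n : ℕ} (A : Fin n → Fin n → Prop) (ℓ : ℕ)
    (C : Fin n → Fin ℓ) : Prop where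
  nonempty : ∀ k : Fin ℓ, ∃ a : Fin n, C a = k
  strong : ∀ a c : Fin n, C a = C c →
    Relation.ReflTransGen (fun v w => A v w ∧ C v = C a ∧ C w = C a) a c
  step : ∀ a c : Fin n, A a c → C c = C a ∨ (C c : ℕ) = (C a : ℕ) + 1
  linked : ∀ k : Fin ℓ, (k : ℕ) + 1 < ℓ →
    ∃ a c : Fin n, A a c ∧ C a = k ∧ (C c : ℕ) = (k : ℕ) + 1

/-- The feedback set `K` covers class `C_k`: some `(i, j) ∈ K` admits indices
`q ≤ k ≤ r` with an input edge from `u_i` into `C_q` and an output edge from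
`C_r` to `y_j`. -/
def coversSCC {n m p ℓ : ℕ} (B : Fin m → Fin n → Prop) (Co : Fin n → Fin p → Prop)
    (C : Fin n → Fin ℓ) (K : Finset (Fin m × Fin p)) (k : Fin ℓ) : Prop :=
  ∃ e ∈ K, ∃ q r : Fin ℓ, q ≤ k ∧ k ≤ r ∧
    (∃ s : Fin n, B e.1 s ∧ C s = q) ∧ (∃ s : Fin n, Co s e.2 ∧ C s = r)

/-- Along a line condensation, a state reaches every state of the same or a later class. -/
theorem line_reach {n ℓ : ℕ} {A : Fin n → Fin n → Prop} {C : Fin n → Fin ℓ}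
    (h : IsLineCondensation A ℓ C) :
    ∀ (d : ℕ) (a c : Fin n), (C c : ℕ) = (C a : ℕ) + d → Relation.ReflTransGen A a c := by
  have same : ∀ a c : Fin n, C a = C c → Relation.ReflTransGen A a c := fun a c hac =>
    Relation.ReflTransGen.mono (p := A) (fun _ _ hvw => hvw.1) _ _ (h.strong a c hac)
  intro d
  induction d with
  | zero =>
    intro a c hac
    exact same a c (Fin.ext (by omega))
  | succ d ih =>
    intro a c hac
    obtain ⟨v, w, hvw, hv, hw⟩ := h.linked (C a) (by have := (C c).isLt; omega)
    exact ((same a v hv.symm).tail hvw).trans (ih w c (by omega))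

/-- State paths lift to closed-loop paths. -/
theorem lift_reach {n m p : ℕ} {A : Fin n → Fin n → Prop} (B : Fin m → Fin n → Prop)
    (Co : Fin n → Fin p → Prop) (K : Finset (Fin m × Fin p)) {a c : Fin n}
    (hac : Relation.ReflTransGen A a c) :
    Relation.ReflTransGen (closedEdge A B Co K) (stX a) (stX c) :=
  Relation.ReflTransGen.lift (p := closedEdge A B Co K) (fun x => stX x)
    (fun _ _ hvw => hvw) _ _ hac

/-- Covering every class gives condition (a). -/
theorem condA_of_covers {n m p ℓ : ℕ} {A : Fin n → Fin n → Prop} {B : Fin m → Fin n → Prop}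
    {Co : Fin n → Fin p → Prop} {C : Fin n → Fin ℓ} (h : IsLineCondensation A ℓ C)
    {K : Finset (Fin m × Fin p)} (hK : ∀ k : Fin ℓ, coversSCC B Co C K k) :
    condA A B Co K := by
  intro a
  obtain ⟨e, heK, q, r, hq, hr, ⟨s, hs, hsq⟩, ⟨t, ht, htr⟩⟩ := hK (C a)
  subst hsq htr
  have h1 : Relation.ReflTransGen (closedEdge A B Co K) (stX a) (stX t) :=
    lift_reach B Co K (line_reach h ((C t : ℕ) - C a) a t (by
      have : (C a : ℕ) ≤ C t := hr
      omega))
  have h2 : Relation.ReflTransGen (closedEdge A B Co K) (stX s) (stX a) :=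
    lift_reach B Co K (line_reach h ((C a : ℕ) - C s) s a (by
      have : (C s : ℕ) ≤ C a := hq
      omega))
  have e1 : closedEdge A B Co K (stX t) (stY e.2) := ht
  have e2 : closedEdge A B Co K (stY e.2) (stU e.1) := heK
  have e3 : closedEdge A B Co K (stU e.1) (stX s) := hs
  exact ⟨e, heK, ⟨(h1.tail e1).tail e2, h2.head e3⟩, ⟨h1.tail e1, (h2.head e3).head e2⟩⟩

/-- The perfect matching gives condition (b). -/
theorem condB_of_perm {n m p : ℕ} {A : Fin n → Fin n → Prop} (B : Fin m → Fin n → Prop)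
    (Co : Fin n → Fin p → Prop) (K : Finset (Fin m × Fin p))
    (σ : Equiv.Perm (Fin n)) (hσ : ∀ a : Fin n, A a (σ a)) : condB A B Co K := by
  refine ⟨Set.range Sum.inl, Sum.map σ id, ⟨?_, ?_, ?_⟩, fun a => ⟨a, rfl⟩, ?_⟩
  · rintro _ ⟨a, rfl⟩
    exact ⟨σ a, rfl⟩
  · rintro _ ⟨a, rfl⟩ _ ⟨c, rfl⟩ hac
    simpa using hac
  · rintro _ ⟨a, rfl⟩
    exact ⟨Sum.inl (σ.symm a), ⟨_, rfl⟩, by simp⟩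
  · rintro _ ⟨a, rfl⟩
    exact hσ a

/-- The region strictly after class `k`, with threshold predicate `Q` on state classes. -/
def region {n m p ℓ : ℕ} (B : Fin m → Fin n → Prop) (Co : Fin n → Fin p → Prop)
    (C : Fin n → Fin ℓ) (k : Fin ℓ) (Q : Fin ℓ → Prop) : SVert n m p → Prop
  | Sum.inl a => Q (C a)
  | Sum.inr (Sum.inl i) => ∀ s, B i s → k < C s
  | Sum.inr (Sum.inr j) => ∃ s, Co s j ∧ k ≤ C s

/-- The region is closed under closed-loop edges when no feedback edge covers `k`. -/
theorem region_closed {n m p ℓ : ℕ} {A : Fin n → Fin n → Prop} {B : Fin m → Fin n → Prop}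
    {Co : Fin n → Fin p → Prop} {C : Fin n → Fin ℓ} (h : IsLineCondensation A ℓ C)
    {K : Finset (Fin m × Fin p)} {k : Fin ℓ} (hk : ¬ coversSCC B Co C K k)
    {Q : Fin ℓ → Prop} (hQ : ∀ x y, x ≤ y → Q x → Q y) (hQ1 : ∀ x, Q x → k ≤ x)
    (hQ2 : ∀ x, k < x → Q x) {v w : SVert n m p}
    (hvw : Relation.ReflTransGen (closedEdge A B Co K) v w)
    (hv : region B Co C k Q v) : region B Co C k Q w := by
  induction hvw with
  | refl => exact hv
  | @tail x y _ hxy ih =>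
    rcases x with a | i | j <;> rcases y with c | i' | j' <;>
      simp only [closedEdge] at hxy
    · refine hQ _ _ ?_ ih
      rcases h.step a c hxy with h1 | h1
      · exact h1.ge
      · exact Fin.le_def.2 (by omega)
    · exact ⟨a, hxy, hQ1 _ ih⟩
    · exact hQ2 _ (ih c hxy)
    · obtain ⟨t, ht, hkt⟩ := ih
      intro s hs
      by_contra hlt
      exact hk ⟨(i', j), hxy, C s, C t, not_lt.1 hlt, hkt, ⟨s, hs, rfl⟩, ⟨t, ht, rfl⟩⟩

/-- Condition (a) implies that every class is covered. -/
theorem covers_of_condA {n m p ℓ : ℕ} {A : Fin n → Fin n → Prop} {B : Fin m → Fin n → Prop}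
    {Co : Fin n → Fin p → Prop} {C : Fin n → Fin ℓ} (h : IsLineCondensation A ℓ C)
    {K : Finset (Fin m × Fin p)} (hK : condA A B Co K) (k : Fin ℓ) :
    coversSCC B Co C K k := by
  by_contra hk
  obtain ⟨a, ha⟩ := h.nonempty k
  obtain ⟨e, _, _, hay, hya⟩ := hK a
  have h1 : region B Co C k (fun x => k ≤ x) (stY e.2) :=
    region_closed h hk (fun _ _ hxy hx => le_trans hx hxy) (fun _ hx => hx)
      (fun _ hx => hx.le) hay (show k ≤ C a from ha.ge)
  have h2 : region B Co C k (fun x => k < x) (stX a) :=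
    region_closed h hk (fun _ _ hxy hx => lt_of_lt_of_le hx hxy) (fun _ hx => le_of_lt hx)
      (fun _ hx => hx) hya h1
  have h3 : k < C a := h2
  exact (ne_of_gt h3) ha

/-- under a line condensation and a perfect matching of the state
bipartite graph (a permutation `σ` of the states with a state edge `x → σ x`
for every `x`), the optimal feedback-selection cost equals the minimum cost of
a set of feedback edges whose associated intervals cover all classes
`C_1,…,C_ℓ`. -/
theorem line_opt_cost_eq_interval_cover_cost {n m p ℓ : ℕ}
    (A : Fin n → Fin n → Prop) (B : Fin m → Fin n → Prop) (Co : Fin n → Fin p → Prop)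
    (C : Fin n → Fin ℓ) (h : IsLineCondensation A ℓ C)
    (σ : Equiv.Perm (Fin n)) (hσ : ∀ a : Fin n, A a (σ a))
    (P : Fin m → Fin p → NNReal) :
    sInf {c : NNReal | ∃ K : Finset (Fin m × Fin p),
        condA A B Co K ∧ condB A B Co K ∧ c = fcost P K}
      = sInf {c : NNReal | ∃ K : Finset (Fin m × Fin p),
          (∀ k : Fin ℓ, coversSCC B Co C K k) ∧ c = fcost P K} := by
  congr 1
  ext c
  constructor
  · rintro ⟨K, hA, _, hc⟩
    exact ⟨K, covers_of_condA h hA, hc⟩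
  · rintro ⟨K, hK, hc⟩
    exact ⟨K, condA_of_covers h hK, condB_of_perm B Co K σ hσ, hc⟩
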